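/- arXiv:math/0411260 — 2 statements merged into one kernel-verified Lean document; each statement's English description precedes it below -/
import Mathlib

section
/- Let M be a connected matroid of rank r on [n] with n ≥ 2, and let 𝓖_min be the family of all nonempty flats G of M such that the restriction M|G is a connected matroid (so [n] ∈ 𝓖_min). Then the following are equivalent: (a) for all flats F ⊊ G of M such that M|G is connected, the contraction (M|G)/F is a connected matroid; (b) for every subset S of 𝓖_min containing [n] that is nested with respect to 𝓖_min, and for every w = Σ_{G∈S, G≠[n]} c_G e_G with all c_G > 0, the matroid M_w has exactly |S| connected components. (Condition (b) expresses that the nested set complex N(L_M, 𝓖_min) equals the Bergman complex B(M).) -/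
open Finset Pointwise

/-- The 0/1 indicator vector (in `ℝ^n`) of a finite set of coordinates. -/
def indVec {n : ℕ} (S : Finset (Fin n)) : Fin n → ℝ := fun i => if i ∈ S then 1 else 0

/-- Independence with respect to a family `𝔅` of bases: being contained in a basis. -/
def FamIndep {n : ℕ} (𝔅 : Finset (Finset (Fin n))) (I : Finset (Fin n)) : Prop :=
  ∃ B ∈ 𝔅, I ⊆ B

/-- Circuits of the family `𝔅`: minimal dependent sets. -/
def FamCircuit {n : ℕ} (𝔅 : Finset (Finset (Fin n))) (C : Finset (Fin n)) : Prop :=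
  ¬ FamIndep 𝔅 C ∧ ∀ D ⊂ C, FamIndep 𝔅 D

open scoped Classical in
/-- The rank of a set: maximal cardinality of an independent subset. -/
noncomputable def famRk {n : ℕ} (𝔅 : Finset (Finset (Fin n))) (F : Finset (Fin n)) : ℕ :=
  (F.powerset.filter (fun I => FamIndep 𝔅 I)).sup Finset.card

open scoped Classical in
/-- The bases of the restriction to `F`: the maximal independent subsets of `F`. -/
noncomputable def famRestrictBases {n : ℕ} (𝔅 : Finset (Finset (Fin n)))
    (F : Finset (Fin n)) : Finset (Finset (Fin n)) :=
  F.powerset.filter fun B =>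
    FamIndep 𝔅 B ∧ ∀ B' ⊆ F, FamIndep 𝔅 B' → B ⊆ B' → B = B'

open scoped Classical in
/-- The bases of the contraction by `F`: the sets `B \ F` where `B` is a basis meeting `F`
in a set of full rank `rk F`. -/
noncomputable def famContractBases {n : ℕ} (𝔅 : Finset (Finset (Fin n)))
    (F : Finset (Fin n)) : Finset (Finset (Fin n)) :=
  (𝔅.filter fun B => (B ∩ F).card = famRk 𝔅 F).image (· \ F)

/-- `i` and `j` are related if equal or contained in a common circuit. -/
def FamConnRel {n : ℕ} (𝔅 : Finset (Finset (Fin n))) (i j : Fin n) : Prop :=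
  i = j ∨ ∃ C, FamCircuit 𝔅 C ∧ i ∈ C ∧ j ∈ C

/-- Number of connected components: number of classes of the equivalence relation
generated by `FamConnRel`. -/
noncomputable def famNumComponents {n : ℕ} (𝔅 : Finset (Finset (Fin n))) : ℕ :=
  Nat.card (Quot (FamConnRel 𝔅))

/-- Connectedness of the matroid presented by bases `𝔅` on the ground set `E`:
any two distinct elements of `E` lie in a common circuit (within `E`). -/
def FamConnectedOn {n : ℕ} (𝔅 : Finset (Finset (Fin n))) (E : Finset (Fin n)) : Prop :=
  ∀ i ∈ E, ∀ j ∈ E, i ≠ j → ∃ C, C ⊆ E ∧ FamCircuit 𝔅 C ∧ i ∈ C ∧ j ∈ C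

/-- A matroid of rank `r` on the ground set `Fin n`, given by its collection of bases:
`r`-element sets satisfying the basis exchange axiom. -/
structure FinMatroid (n r : ℕ) where
  bases : Finset (Finset (Fin n))
  bases_nonempty : bases.Nonempty
  card_bases : ∀ B ∈ bases, B.card = r
  exchange : ∀ B₁ ∈ bases, ∀ B₂ ∈ bases, ∀ i ∈ B₁ \ B₂,
      ∃ j ∈ B₂ \ B₁, insert j (B₁.erase i) ∈ bases

namespace FinMatroid

variable {n r : ℕ}

def Indep (M : FinMatroid n r) (I : Finset (Fin n)) : Prop := FamIndep M.bases I

def IsCircuit (M : FinMatroid n r) (C : Finset (Fin n)) : Prop := FamCircuit M.bases C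

noncomputable def rk (M : FinMatroid n r) (F : Finset (Fin n)) : ℕ := famRk M.bases F

/-- A flat: no circuit leaves exactly one element outside `F`. -/
def IsFlat (M : FinMatroid n r) (F : Finset (Fin n)) : Prop :=
  ∀ C, M.IsCircuit C → (C \ F).card ≠ 1

open scoped Classical in
/-- Closure of a set: the intersection of all flats containing it (the smallest flat
containing it). -/
noncomputable def closure (M : FinMatroid n r) (S : Finset (Fin n)) : Finset (Fin n) :=
  Finset.univ.filter fun i => ∀ F, M.IsFlat F → S ⊆ F → i ∈ F

/-- No single element is dependent. -/
def Loopless (M : FinMatroid n r) : Prop := ∀ i : Fin n, M.Indep {i}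

noncomputable def numComponents (M : FinMatroid n r) : ℕ := famNumComponents M.bases

/-- Any two distinct elements lie in a common circuit. -/
def Connected (M : FinMatroid n r) : Prop :=
  ∀ i j : Fin n, i ≠ j → ∃ C, M.IsCircuit C ∧ i ∈ C ∧ j ∈ C

/-- `B` is a `w`-maximal basis of `M`. -/
def IsMaxBasis (M : FinMatroid n r) (w : Fin n → ℝ) (B : Finset (Fin n)) : Prop :=
  B ∈ M.bases ∧ ∀ B' ∈ M.bases, ∑ i ∈ B', w i ≤ ∑ i ∈ B, w i

open scoped Classical in
/-- The bases of the matroid `M_w`: the `w`-maximal bases of `M`. -/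
noncomputable def maxBases (M : FinMatroid n r) (w : Fin n → ℝ) :
    Finset (Finset (Fin n)) :=
  M.bases.filter fun B => ∀ B' ∈ M.bases, ∑ i ∈ B', w i ≤ ∑ i ∈ B, w i

/-- Membership in the Bergman fan: on every circuit the minimum of `w` is attained
at least twice. -/
def InBergmanFan (M : FinMatroid n r) (w : Fin n → ℝ) : Prop :=
  ∀ C, M.IsCircuit C → ∃ i ∈ C, ∃ j ∈ C, i ≠ j ∧ w i = w j ∧ ∀ k ∈ C, w i ≤ w k

/-- The matroid polytope: convex hull of the indicator vectors of the bases. -/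
noncomputable def polytope (M : FinMatroid n r) : Set (Fin n → ℝ) :=
  convexHull ℝ (indVec '' ↑M.bases)

noncomputable def restrictBases (M : FinMatroid n r) (F : Finset (Fin n)) :
    Finset (Finset (Fin n)) :=
  famRestrictBases M.bases F

noncomputable def contractBases (M : FinMatroid n r) (F : Finset (Fin n)) :
    Finset (Finset (Fin n)) :=
  famContractBases M.bases F

/-- `𝓖` is a building set in the lattice of flats of `M` (with bottom element `∅` and
join = closure of union): for every nonempty flat `X`, the join map is an order
isomorphism from the product of the lower intervals of the maximal elements of
`𝓖` below `X` onto the lower interval of `X`. -/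
def IsFlatBuilding (M : FinMatroid n r) (𝓖 : Set (Finset (Fin n))) : Prop :=
  (∀ F ∈ 𝓖, M.IsFlat F ∧ F ≠ ∅) ∧
  ∀ X, M.IsFlat X → X ≠ ∅ →
    ∃ (k : ℕ) (g : Fin k → Finset (Fin n)),
      Function.Injective g ∧
      (∀ i, g i ∈ 𝓖 ∧ g i ⊆ X) ∧
      (∀ i, ∀ H ∈ 𝓖, H ⊆ X → g i ⊆ H → g i = H) ∧
      (∀ H ∈ 𝓖, H ⊆ X → ∃ i, H ⊆ g i) ∧
      ∃ e : (∀ i : Fin k, {F : Finset (Fin n) // M.IsFlat F ∧ F ⊆ g i}) ≃o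
              {F : Finset (Fin n) // M.IsFlat F ∧ F ⊆ X},
        ∀ y, (e y).1 = M.closure (Finset.univ.sup fun i => (y i).1)

/-- `S` is nested with respect to `𝓖` (in the lattice of flats of `M`): `S ⊆ 𝓖` and for
every subcollection of at least two pairwise incomparable members, their join (the
closure of their union) is not in `𝓖`. -/
def IsNested (M : FinMatroid n r) (𝓖 : Set (Finset (Fin n)))
    (S : Finset (Finset (Fin n))) : Prop :=
  ↑S ⊆ 𝓖 ∧ ∀ T ⊆ S, 2 ≤ T.card →
    (∀ A ∈ T, ∀ B ∈ T, A ≠ B → ¬ A ⊆ B ∧ ¬ B ⊆ A) →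
    M.closure (T.sup id) ∉ 𝓖

end FinMatroid

/-- A building set in the Boolean lattice of subsets of `Fin r`: for every nonempty
`X ⊆ [r]`, the union map is an order isomorphism from the product of the lower
intervals of the maximal elements of `𝓕` below `X` onto the lower interval of `X`. -/
def BoolBuilding {r : ℕ} (𝓕 : Set (Finset (Fin r))) : Prop :=
  (∀ F ∈ 𝓕, F ≠ ∅) ∧
  ∀ X : Finset (Fin r), X ≠ ∅ →
    ∃ (k : ℕ) (g : Fin k → Finset (Fin r)),
      Function.Injective g ∧
      (∀ i, g i ∈ 𝓕 ∧ g i ⊆ X) ∧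
      (∀ i, ∀ H ∈ 𝓕, H ⊆ X → g i ⊆ H → g i = H) ∧
      (∀ H ∈ 𝓕, H ⊆ X → ∃ i, H ⊆ g i) ∧
      ∃ e : (∀ i : Fin k, {F : Finset (Fin r) // F ⊆ g i}) ≃o
              {F : Finset (Fin r) // F ⊆ X},
        ∀ y, (e y).1 = Finset.univ.sup fun i => (y i).1

/-- `S` is nested with respect to `𝓕` in the Boolean lattice: for every subcollection
of at least two pairwise incomparable members, their union is not in `𝓕`. -/
def BoolNested {r : ℕ} (𝓕 : Set (Finset (Fin r))) (S : Finset (Finset (Fin r))) : Prop :=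
  ↑S ⊆ 𝓕 ∧ ∀ T ⊆ S, 2 ≤ T.card →
    (∀ A ∈ T, ∀ B ∈ T, A ≠ B → ¬ A ⊆ B ∧ ¬ B ⊆ A) →
    T.sup id ∉ 𝓕

/-- The simplex `Δ_F = conv{e_i : i ∈ F}`. -/
noncomputable def faceSimplex {r : ℕ} (F : Finset (Fin r)) : Set (Fin r → ℝ) :=
  convexHull ℝ ((fun i => (Pi.single i 1 : Fin r → ℝ)) '' ↑F)

/-- The Minkowski sum `Δ_𝓕 = Σ_{F ∈ 𝓕} Δ_F`. -/
noncomputable def minkSum {r : ℕ} (𝓕 : Finset (Finset (Fin r))) : Set (Fin r → ℝ) :=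
  ∑ F ∈ 𝓕, faceSimplex F

set_option linter.unusedSectionVars false

namespace S17

open Set in
/-- Transitivity of the common-circuit relation. -/
theorem circ_trans {α : Type*} [Finite α] (N : Matroid α) (x z : α) : ∀ (k : ℕ) (C₁ C₂ : Set α),
    (C₁ ∪ C₂).ncard ≤ k → N.IsCircuit C₁ → N.IsCircuit C₂ → x ∈ C₁ → z ∈ C₂ →
    (C₁ ∩ C₂).Nonempty → ∃ C, N.IsCircuit C ∧ C ⊆ C₁ ∪ C₂ ∧ x ∈ C ∧ z ∈ C := by
  intro k
  induction k with
  | zero =>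
    intro C₁ C₂ hk h1 h2 hx
    have : (C₁ ∪ C₂) = ∅ := by
      rw [← Set.ncard_eq_zero (Set.toFinite _)]; omega
    have hx' : x ∈ C₁ ∪ C₂ := Or.inl hx
    rw [this] at hx'; exact absurd hx' (by simp)
  | succ k ih =>
    intro C₁ C₂ hk h1 h2 hx hz ⟨y, hy1, hy2⟩
    by_cases hx2 : x ∈ C₂
    · exact ⟨C₂, h2, subset_union_right, hx2, hz⟩
    by_cases hz1 : z ∈ C₁
    · exact ⟨C₁, h1, subset_union_left, hx, hz1⟩
    obtain ⟨C₃, h3s, h3, hx3⟩ := h1.strong_elimination h2 hy1 hy2 hx hx2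
    have h3s' : C₃ ⊆ C₁ ∪ C₂ := fun a ha => (h3s ha).1
    have : ¬ C₃ ⊆ C₁ := by
      intro hs
      have := h3.eq_of_subset_isCircuit h1 hs
      subst this
      exact (h3s hy1).2 rfl
    obtain ⟨u, hu3, hu1⟩ := Set.not_subset.1 this
    have hu2 : u ∈ C₂ := (h3s' hu3).resolve_left hu1
    by_cases hz3 : z ∈ C₃
    · exact ⟨C₃, h3, h3s', hx3, hz3⟩
    obtain ⟨C₄, h4s, h4, hz4⟩ := h2.strong_elimination h3 hu2 hu3 hz hz3
    have : ¬ C₄ ⊆ C₂ := by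
      intro hs
      have := h4.eq_of_subset_isCircuit h2 hs
      subst this
      exact (h4s hu2).2 rfl
    obtain ⟨v, hv4, hv2⟩ := Set.not_subset.1 this
    have hv3 : v ∈ C₃ := (h4s hv4).1.resolve_left hv2
    have hv1 : v ∈ C₁ := (h3s' hv3).resolve_right hv2
    have hsub : C₁ ∪ C₄ ⊆ C₁ ∪ C₂ := by
      apply union_subset subset_union_left
      intro a ha
      rcases (h4s ha).1 with h | h
      · exact Or.inr h
      · exact h3s' h
    have hlt : (C₁ ∪ C₄).ncard < (C₁ ∪ C₂).ncard := by
      apply Set.ncard_lt_ncard _ (Set.toFinite _)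
      refine ⟨hsub, fun h => ?_⟩
      rcases h (Or.inr hu2 : u ∈ C₁ ∪ C₂) with h | h
      · exact hu1 h
      · exact (h4s h).2 rfl
    obtain ⟨C, hC, hCs, hxC, hzC⟩ := ih C₁ C₄ (by omega) h1 h4 hx hz4 ⟨v, hv1, hv4⟩
    exact ⟨C, hC, hCs.trans hsub, hxC, hzC⟩

/-- Connectedness of the restriction to `X`. -/
def Conn {α : Type*} (N : Matroid α) (X : Set α) : Prop :=
  ∀ i ∈ X, ∀ j ∈ X, i ≠ j → ∃ C, N.IsCircuit C ∧ C ⊆ X ∧ i ∈ C ∧ j ∈ C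

/-- The component of `i` in the restriction to `X`. -/
def comp {α : Type*} (N : Matroid α) (X : Set α) (i : α) : Set α :=
  {j | j ∈ X ∧ (i = j ∨ ∃ C, N.IsCircuit C ∧ C ⊆ X ∧ i ∈ C ∧ j ∈ C)}

section
variable {α : Type*} [Finite α] {N : Matroid α} {X : Set α} {i : α}

theorem comp_subset : comp N X i ⊆ X := fun _ h => h.1

theorem mem_comp_self (hi : i ∈ X) : i ∈ comp N X i := ⟨hi, Or.inl rfl⟩

theorem circ_subset_comp {C : Set α} (hC : N.IsCircuit C) (hCX : C ⊆ X) {j : α} (hj : j ∈ C)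
    (hjK : j ∈ comp N X i) : C ⊆ comp N X i := by
  intro l hl
  refine ⟨hCX hl, ?_⟩
  rcases hjK.2 with rfl | ⟨D, hD, hDX, hiD, hjD⟩
  · exact Or.inr ⟨C, hC, hCX, hj, hl⟩
  · obtain ⟨C', h1, h2, h3, h4⟩ := circ_trans N i l _ D C le_rfl hD hC hiD hl ⟨j, hjD, hj⟩
    exact Or.inr ⟨C', h1, h2.trans (Set.union_subset hDX hCX), h3, h4⟩

theorem conn_subset_comp {Y : Set α} (hY : Conn N Y) (hYX : Y ⊆ X) {j : α} (hj : j ∈ Y)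
    (hjK : j ∈ comp N X i) : Y ⊆ comp N X i := by
  intro l hl
  by_cases h : j = l
  · exact h ▸ hjK
  obtain ⟨C, hC, hCY, hjC, hlC⟩ := hY j hj l hl h
  exact circ_subset_comp hC (hCY.trans hYX) hjC hjK hlC

theorem comp_conn : Conn N (comp N X i) := by
  intro j hj k hk hjk
  have key : ∀ C, N.IsCircuit C → C ⊆ X → j ∈ C → k ∈ C →
      ∃ C, N.IsCircuit C ∧ C ⊆ comp N X i ∧ j ∈ C ∧ k ∈ C :=
    fun C hC hCX hjC hkC => ⟨C, hC, circ_subset_comp hC hCX hjC hj, hjC, hkC⟩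
  rcases hj.2 with rfl | ⟨D, hD, hDX, hiD, hjD⟩
  · rcases hk.2 with rfl | ⟨E, hE, hEX, hiE, hkE⟩
    · exact absurd rfl hjk
    · exact key E hE hEX hiE hkE
  · rcases hk.2 with rfl | ⟨E, hE, hEX, hiE, hkE⟩
    · exact key D hD hDX hjD hiD
    · obtain ⟨C', h1, h2, h3, h4⟩ := circ_trans N j k _ D E le_rfl hD hE hjD hkE ⟨i, hiD, hiE⟩
      exact key C' h1 (h2.trans (Set.union_subset hDX hEX)) h3 h4

theorem comp_flat (hL : N.closure ∅ = ∅) (hX : N.IsFlat X) : N.IsFlat (comp N X i) := by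
  rw [Matroid.isFlat_iff_closure_eq]
  apply Set.Subset.antisymm
  · intro e he
    by_contra hne
    obtain ⟨C, hCs, hC, heC⟩ := Matroid.exists_isCircuit_of_mem_closure he hne
    have heX : e ∈ X := by
      have := N.closure_subset_closure (comp_subset (N := N) (X := X) (i := i)) he
      rwa [hX.closure] at this
    have hCX : C ⊆ X := hCs.trans (Set.insert_subset heX comp_subset)
    have : ∃ j ∈ C, j ≠ e := by
      by_contra hcon
      push Not at hcon
      have hmem := hC.mem_closure_sdiff_singleton_of_mem heC
      have : C \ {e} = ∅ := by
        ext a; simp only [Set.mem_sdiff, Set.mem_singleton_iff, Set.mem_empty_iff_false, iff_false]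
        intro ⟨h1, h2⟩; exact h2 (hcon a h1)
      rw [this, hL] at hmem
      exact hmem
    obtain ⟨j, hjC, hje⟩ := this
    have hjK : j ∈ comp N X i := (hCs hjC).resolve_left hje
    exact hne (circ_subset_comp hC hCX hjC hjK heC)
  · exact N.subset_closure _ (comp_subset.trans hX.subset_ground)
end

/-- Nested families of connected flats, matroid side. -/
structure Nest {α : Type*} [DecidableEq α] (N : Matroid α) (S : Finset (Finset α)) : Prop where
  flat : ∀ G ∈ S, N.IsFlat (G : Set α)
  ne : ∀ G ∈ S, G.Nonempty
  conn : ∀ G ∈ S, Conn N (G : Set α)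
  nest : ∀ T ⊆ S, 2 ≤ T.card → (∀ A ∈ T, ∀ B ∈ T, A ≠ B → ¬ A ⊆ B ∧ ¬ B ⊆ A) →
    ¬ Conn N (N.closure ((T.sup id : Finset α) : Set α))

/-- Union of the members of `S` strictly below `G`. -/
def low {α : Type*} [DecidableEq α] (S : Finset (Finset α)) (G : Finset α) : Finset α :=
  (S.filter (· ⊂ G)).sup id

section
variable {α : Type*} [Fintype α] [DecidableEq α] {N : Matroid α} {S : Finset (Finset α)}

theorem mem_supid {U : Finset (Finset α)} {e : α} : e ∈ U.sup id ↔ ∃ H ∈ U, e ∈ H := by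
  simp [Finset.mem_sup]

theorem mem_low {G : Finset α} {e : α} : e ∈ low S G ↔ ∃ H ∈ S, H ⊂ G ∧ e ∈ H := by
  simp [low, Finset.mem_sup, and_assoc]

theorem low_subset {G : Finset α} : low S G ⊆ G := by
  intro e he
  obtain ⟨H, -, hHG, heH⟩ := mem_low.1 he
  exact hHG.1 heH

theorem Nest.comp_mem (hS : Nest N S) (hE : N.E = Set.univ) (hL : N.closure ∅ = ∅)
    {U : Finset (Finset α)} (hU : U ⊆ S) {x : α}
    (hx : x ∈ N.closure ((U.sup id : Finset α) : Set α)) :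
    ∃ H ∈ U, (H : Set α) = comp N (N.closure ((U.sup id : Finset α) : Set α)) x := by
  classical
  have hUE : ((U.sup id : Finset α) : Set α) ⊆ N.E := by rw [hE]; exact Set.subset_univ _
  set X := N.closure ((U.sup id : Finset α) : Set α) with hX
  have hXflat : N.IsFlat X := N.isFlat_closure _
  set K := comp N X x with hK
  have hKflat : N.IsFlat K := comp_flat hL hXflat
  have hUX : ∀ H ∈ U, (H : Set α) ⊆ X := fun H hH e he =>
    N.subset_closure _ hUE (by exact_mod_cast mem_supid.2 ⟨H, hH, he⟩)
  let UK : Finset (Finset α) := U.filter (fun H : Finset α => (H : Set α) ⊆ K)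
  let T : Finset (Finset α) := UK.filter (fun H => ∀ H' ∈ UK, H ⊆ H' → H' = H)
  have hTU : T ⊆ U := (Finset.filter_subset _ _).trans (Finset.filter_subset _ _)
  have hmax : ∀ H ∈ UK, ∃ H' ∈ T, H ⊆ H' := by
    intro H hH
    obtain ⟨H', hle, hm⟩ := UK.finite_toSet.exists_le_maximal (a := H) (by exact_mod_cast hH)
    refine ⟨H', Finset.mem_filter.2 ⟨by exact_mod_cast hm.prop, fun H'' hH'' hs => ?_⟩, hle⟩
    exact le_antisymm (hm.le_of_ge (by exact_mod_cast hH'') hs) hs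
  have hKT : K = N.closure ((T.sup id : Finset α) : Set α) := by
    have hTE : ((T.sup id : Finset α) : Set α) ⊆ N.E := by rw [hE]; exact Set.subset_univ _
    have hin : ∀ e ∈ K, e ∈ U.sup id → e ∈ T.sup id := by
      intro e heK heU
      obtain ⟨H, hH, heH⟩ := mem_supid.1 heU
      have hHK : (H : Set α) ⊆ K := conn_subset_comp (hS.conn H (hU hH)) (hUX H hH) heH heK
      obtain ⟨H', hH', hs⟩ := hmax H (Finset.mem_filter.2 ⟨hH, hHK⟩)
      exact mem_supid.2 ⟨H', hH', hs heH⟩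
    apply Set.Subset.antisymm
    · intro e he
      by_cases heU : e ∈ U.sup id
      · exact N.subset_closure _ hTE (by exact_mod_cast hin e he heU)
      obtain ⟨C, hCs, hC, heC⟩ := Matroid.exists_isCircuit_of_mem_closure (comp_subset he)
        (by exact_mod_cast heU)
      have hCX : C ⊆ X := hCs.trans (Set.insert_subset (comp_subset he) (N.subset_closure _ hUE))
      have hCK := circ_subset_comp hC hCX heC he
      apply N.closure_subset_closure _ (hC.mem_closure_sdiff_singleton_of_mem heC)
      intro a ⟨haC, hae⟩
      have : a ∈ U.sup id := by exact_mod_cast (hCs haC).resolve_left hae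
      exact_mod_cast hin a (hCK haC) this
    · rw [← hKflat.closure]
      apply N.closure_subset_closure
      intro e he
      obtain ⟨H, hH, heH⟩ := mem_supid.1 (by exact_mod_cast he : e ∈ T.sup id)
      exact (Finset.mem_filter.1 (Finset.mem_filter.1 hH).1).2 heH
  have hxK : x ∈ K := mem_comp_self hx
  have hcard : ¬ 2 ≤ T.card := by
    intro h2
    refine hS.nest T (hTU.trans hU) h2 ?_ (hKT ▸ comp_conn)
    intro A hA B hB hAB
    refine ⟨fun h => hAB ?_, fun h => hAB ?_⟩
    · exact ((Finset.mem_filter.1 hA).2 B (Finset.mem_filter.1 hB).1 h).symm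
    · exact ((Finset.mem_filter.1 hB).2 A (Finset.mem_filter.1 hA).1 h)
  rcases T.eq_empty_or_nonempty with hT | hT
  · rw [hKT, hT] at hxK
    simp [hL] at hxK
  · have h1 : T.card = 1 := by have := hT.card_pos; omega
    obtain ⟨H, hH⟩ := Finset.card_eq_one.1 h1
    have hHT : H ∈ T := by rw [hH]; simp
    refine ⟨H, hTU hHT, ?_⟩
    rw [hKT, hH, Finset.sup_singleton]
    exact (hS.flat H (hU (hTU hHT))).closure.symm

theorem Nest.sup_flat (hS : Nest N S) (hE : N.E = Set.univ) (hL : N.closure ∅ = ∅)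
    {U : Finset (Finset α)} (hU : U ⊆ S) : N.closure ((U.sup id : Finset α) : Set α) = U.sup id := by
  apply Set.Subset.antisymm
  · intro x hx
    obtain ⟨H, hH, hc⟩ := hS.comp_mem hE hL hU hx
    have : x ∈ (H : Set α) := hc ▸ mem_comp_self hx
    exact_mod_cast mem_supid.2 ⟨H, hH, by exact_mod_cast this⟩
  · exact N.subset_closure _ (by rw [hE]; exact Set.subset_univ _)

theorem Nest.circ (hS : Nest N S) (hE : N.E = Set.univ) (hL : N.closure ∅ = ∅)
    {U : Finset (Finset α)} (hU : U ⊆ S) {C : Set α} (hC : N.IsCircuit C)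
    (hCU : C ⊆ ((U.sup id : Finset α) : Set α)) : ∃ H ∈ U, C ⊆ (H : Set α) := by
  obtain ⟨x, hx⟩ := hC.nonempty
  have hCX := hCU
  rw [← hS.sup_flat hE hL hU] at hCX
  obtain ⟨H, hH, hc⟩ := hS.comp_mem hE hL hU (hCX hx)
  exact ⟨H, hH, hc ▸ circ_subset_comp hC hCX hx (mem_comp_self (hCX hx))⟩

theorem Nest.chain (hS : Nest N S) (hE : N.E = Set.univ) (hL : N.closure ∅ = ∅)
    {A B : Finset α} (hA : A ∈ S) (hB : B ∈ S) {x : α} (hxA : x ∈ A) (hxB : x ∈ B) :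
    A ⊆ B ∨ B ⊆ A := by
  have hU : ({A, B} : Finset (Finset α)) ⊆ S := by
    intro H hH
    simp only [Finset.mem_insert, Finset.mem_singleton] at hH
    rcases hH with rfl | rfl <;> assumption
  have hcl := hS.sup_flat hE hL hU
  have hx : x ∈ N.closure ((({A, B} : Finset (Finset α)).sup id : Finset α) : Set α) := by
    rw [hcl]; simp [hxA]
  have hsub : ∀ D ∈ ({A, B} : Finset (Finset α)), (D : Set α) ⊆
      N.closure ((({A, B} : Finset (Finset α)).sup id : Finset α) : Set α) := by
    intro D hD e he
    rw [hcl]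
    exact_mod_cast mem_supid.2 ⟨D, hD, he⟩
  obtain ⟨H, hH, hc⟩ := hS.comp_mem hE hL hU hx
  have h1 : A ⊆ H := by
    rw [← Finset.coe_subset, hc]
    exact conn_subset_comp (hS.conn A hA) (hsub A (by simp)) hxA (mem_comp_self hx)
  have h2 : B ⊆ H := by
    rw [← Finset.coe_subset, hc]
    exact conn_subset_comp (hS.conn B hB) (hsub B (by simp)) hxB (mem_comp_self hx)
  simp only [Finset.mem_insert, Finset.mem_singleton] at hH
  rcases hH with rfl | rfl
  · exact Or.inr h2
  · exact Or.inl h1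

theorem Nest.low_flat (hS : Nest N S) (hE : N.E = Set.univ) (hL : N.closure ∅ = ∅)
    (G : Finset α) : N.closure ((low S G : Finset α) : Set α) = low S G :=
  hS.sup_flat hE hL (Finset.filter_subset _ _)

theorem Nest.low_ne (hS : Nest N S) (hE : N.E = Set.univ) (hL : N.closure ∅ = ∅)
    {G : Finset α} (hG : G ∈ S) : low S G ≠ G := by
  intro h
  obtain ⟨x, hx⟩ := hS.ne G hG
  have hcl := hS.low_flat hE hL G
  have hx' : x ∈ N.closure ((low S G : Finset α) : Set α) := by
    rw [hcl, h]; exact_mod_cast hx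
  obtain ⟨H, hH, hc⟩ := hS.comp_mem hE hL (Finset.filter_subset _ _) hx'
  have : G ⊆ H := by
    rw [← Finset.coe_subset, hc]
    refine conn_subset_comp (hS.conn G hG) ?_ hx (mem_comp_self hx')
    change _ ⊆ N.closure ((low S G : Finset α) : Set α)
    rw [hcl, h]
  exact (Finset.mem_filter.1 hH).2.2 this

theorem exists_part (hu : Finset.univ ∈ S) (i : α) : ∃ G ∈ S, i ∈ G \ low S G := by
  obtain ⟨G, hG, hm⟩ := Finset.exists_min_image (S.filter (i ∈ ·)) Finset.card
    ⟨Finset.univ, by simp [hu]⟩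
  rw [Finset.mem_filter] at hG
  refine ⟨G, hG.1, Finset.mem_sdiff.2 ⟨hG.2, fun hl => ?_⟩⟩
  obtain ⟨H, hH, hHG, hiH⟩ := mem_low.1 hl
  exact absurd (hm H (Finset.mem_filter.2 ⟨hH, hiH⟩)) (not_le.2 (Finset.card_lt_card hHG))

theorem Nest.part_unique (hS : Nest N S) (hE : N.E = Set.univ) (hL : N.closure ∅ = ∅)
    {A B : Finset α} (hA : A ∈ S) (hB : B ∈ S) {x : α} (hxA : x ∈ A \ low S A)
    (hxB : x ∈ B \ low S B) : A = B := by
  rw [Finset.mem_sdiff] at hxA hxB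
  by_contra hne
  rcases hS.chain hE hL hA hB hxA.1 hxB.1 with h | h
  · exact hxB.2 (mem_low.2 ⟨A, hA, lt_of_le_of_ne h hne, hxA.1⟩)
  · exact hxA.2 (mem_low.2 ⟨B, hB, lt_of_le_of_ne h (Ne.symm hne), hxB.1⟩)

/-- Independent sets of `M_w`: extension to an adapted base. -/
theorem Nest.exists_base (hS : Nest N S) (hE : N.E = Set.univ) (hL : N.closure ∅ = ∅)
    (hu : Finset.univ ∈ S) (I : Set α)
    (hI : ∀ G ∈ S, (N.contract (low S G : Set α)).Indep (I ∩ (G \ low S G : Finset α))) :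
    ∃ B, I ⊆ B ∧ ∀ G ∈ S, N.IsBasis (B ∩ (G : Set α)) (G : Set α) := by
  have hch : ∀ G : Finset α, ∃ J : Set α, G ∈ S →
      (N.contract (low S G : Set α)).IsBasis J ((G \ low S G : Finset α) : Set α) ∧
      I ∩ (G \ low S G : Finset α) ⊆ J := by
    intro G
    by_cases hG : G ∈ S
    · obtain ⟨J, hJ, hs⟩ := (hI G hG).subset_isBasis_of_subset (X := ((G \ low S G : Finset α) : Set α))
        Set.inter_subset_right (by
          rw [Matroid.contract_ground, hE, Finset.coe_sdiff]
          exact Set.sdiff_subset_sdiff_left (Set.subset_univ _))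
      exact ⟨J, fun _ => ⟨hJ, hs⟩⟩
    · exact ⟨∅, fun h => absurd h hG⟩
  choose J hJ using hch
  let B : Set α := {x | ∃ G ∈ S, x ∈ J G}
  have hJs : ∀ G ∈ S, J G ⊆ ((G \ low S G : Finset α) : Set α) := fun G hG => (hJ G hG).1.subset
  refine ⟨B, ?_, ?_⟩
  · intro x hx
    obtain ⟨G, hG, hxG⟩ := exists_part hu x
    exact ⟨G, hG, (hJ G hG).2 ⟨hx, by exact_mod_cast hxG⟩⟩
  · intro G
    induction G using Finset.strongInduction with
    | H G ih =>
    intro hG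
    have hFb : N.IsBasis (B ∩ (low S G : Set α)) (low S G : Set α) := by
      rw [Matroid.isBasis_iff_indep_subset_closure]
      refine ⟨?_, Set.inter_subset_right, ?_⟩
      · by_contra hdep
        rw [Matroid.not_indep_iff (by rw [hE]; exact Set.subset_univ _)] at hdep
        obtain ⟨C, hCs, hC⟩ := hdep.exists_isCircuit_subset
        obtain ⟨H, hH, hCH⟩ := hS.circ hE hL (Finset.filter_subset (· ⊂ G) S) hC
          (hCs.trans Set.inter_subset_right)
        rw [Finset.mem_filter] at hH
        exact hC.dep.not_indep ((ih H hH.2 hH.1).indep.subset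
          (fun a ha => ⟨(hCs ha).1, hCH ha⟩))
      · intro x hx
        obtain ⟨H, hH, hHG, hxH⟩ := mem_low.1 (by exact_mod_cast hx : x ∈ low S G)
        apply N.closure_subset_closure _ ((ih H hHG hH).subset_closure hxH)
        intro a ⟨haB, haH⟩
        refine ⟨haB, ?_⟩
        exact_mod_cast mem_low.2 ⟨H, hH, hHG, by exact_mod_cast haH⟩
    have hBJ : B ∩ ((G \ low S G : Finset α) : Set α) = J G := by
      ext x
      constructor
      · rintro ⟨⟨G', hG', hxJ⟩, hxG⟩
        have h1 := hJs G' hG' hxJ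
        have := hS.part_unique hE hL hG hG' (by exact_mod_cast hxG) (by exact_mod_cast h1)
        exact this ▸ hxJ
      · intro hx
        exact ⟨⟨G, hG, hx⟩, hJs G hG hx⟩
    have hBG : B ∩ (G : Set α) = J G ∪ (B ∩ (low S G : Set α)) := by
      rw [← hBJ]
      ext x
      have : x ∈ low S G → x ∈ G := fun h => low_subset h
      simp only [Set.mem_inter_iff, Set.mem_union, Finset.mem_coe, Finset.mem_sdiff]
      tauto
    have hind := (hFb.contract_indep_iff.1 (hJ G hG).1.indep)
    rw [Matroid.isBasis_iff_indep_subset_closure]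
    refine ⟨?_, Set.inter_subset_right, ?_⟩
    · rw [hBG]; exact hind.1
    · intro x hx
      by_cases hxl : x ∈ low S G
      · apply N.closure_subset_closure _ (hFb.subset_closure hxl)
        rw [hBG]; exact Set.subset_union_right
      · have h1 := (hJ G hG).1.subset_closure (by exact_mod_cast Finset.mem_sdiff.2 ⟨hx, hxl⟩ : x ∈ ((G \ low S G : Finset α) : Set α))
        rw [Matroid.contract_closure_eq] at h1
        have h2 := h1.1
        rw [Matroid.closure_union_congr_right hFb.closure_eq_closure.symm, ← hBG] at h2
        exact h2

theorem indep_of_base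
    {I B : Set α} (hIB : I ⊆ B)
    (hB : ∀ G ∈ S, N.IsBasis (B ∩ (G : Set α)) (G : Set α)) :
    ∀ G ∈ S, (N.contract (low S G : Set α)).Indep (I ∩ (G \ low S G : Finset α)) := by
  intro G hG
  have hFb : N.IsBasis (B ∩ (low S G : Set α)) (low S G : Set α) := by
    rw [Matroid.isBasis_iff_indep_subset_closure]
    refine ⟨(hB G hG).indep.subset ?_, Set.inter_subset_right, ?_⟩
    · apply Set.inter_subset_inter_right
      exact_mod_cast low_subset
    · intro x hx
      obtain ⟨H, hH, hHG, hxH⟩ := mem_low.1 (by exact_mod_cast hx : x ∈ low S G)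
      apply N.closure_subset_closure _ ((hB H hH).subset_closure hxH)
      intro a ⟨haB, haH⟩
      refine ⟨haB, ?_⟩
      exact_mod_cast mem_low.2 ⟨H, hH, hHG, by exact_mod_cast haH⟩
  rw [hFb.contract_indep_iff]
  constructor
  · apply (hB G hG).indep.subset
    rintro x (⟨hx, hxG⟩ | ⟨hx, hxG⟩)
    · exact ⟨hIB hx, by simp at hxG; exact hxG.1⟩
    · exact ⟨hx, by exact_mod_cast low_subset (by exact_mod_cast hxG)⟩
  · rw [Set.disjoint_left]
    rintro x hx ⟨_, h2⟩
    simp at hx h2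
    exact h2.2 hx
end

section
variable {n r : ℕ} (M : FinMatroid n r)

/-- The Mathlib matroid associated with a `FinMatroid`. -/
def toMat : Matroid (Fin n) :=
  Matroid.ofIsBaseOfFinite (E := Set.univ) (Set.toFinite _)
    (fun B => ∃ B' ∈ M.bases, (B' : Set (Fin n)) = B)
    (by obtain ⟨B, hB⟩ := M.bases_nonempty; exact ⟨B, B, hB, rfl⟩)
    (by
      rintro _ _ ⟨B₁, h1, rfl⟩ ⟨B₂, h2, rfl⟩ a ha
      obtain ⟨j, hj, hB⟩ := M.exchange B₁ h1 B₂ h2 a (by simpa using ha)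
      refine ⟨j, by simpa using hj, _, hB, ?_⟩
      simp)
    (fun _ _ => Set.subset_univ _)

theorem toMat_E : (toMat M).E = Set.univ := rfl

theorem toMat_sub (X : Set (Fin n)) : X ⊆ (toMat M).E := Set.subset_univ _

theorem toMat_base (B : Finset (Fin n)) : (toMat M).IsBase (B : Set (Fin n)) ↔ B ∈ M.bases := by
  change (∃ B' ∈ M.bases, (B' : Set (Fin n)) = B) ↔ _
  constructor
  · rintro ⟨B', hB', h⟩
    rw [Finset.coe_inj] at h
    exact h ▸ hB'
  · exact fun h => ⟨B, h, rfl⟩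

theorem toMat_indep (I : Finset (Fin n)) :
    FamIndep M.bases I ↔ (toMat M).Indep (I : Set (Fin n)) := by
  rw [Matroid.indep_iff]
  constructor
  · rintro ⟨B, hB, h⟩
    exact ⟨B, (toMat_base M B).2 hB, by exact_mod_cast h⟩
  · rintro ⟨B, ⟨B', hB', rfl⟩, h⟩
    exact ⟨B', hB', by exact_mod_cast h⟩

theorem circ_bridge {N : Matroid (Fin n)} {𝔅 : Finset (Finset (Fin n))} {E : Finset (Fin n)}
    (hE : (E : Set (Fin n)) ⊆ N.E)
    (h : ∀ I ⊆ E, (FamIndep 𝔅 I ↔ N.Indep (I : Set (Fin n)))) (C : Finset (Fin n)) (hC : C ⊆ E) :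
    FamCircuit 𝔅 C ↔ N.IsCircuit (C : Set (Fin n)) := by
  classical
  have hCE : (C : Set (Fin n)) ⊆ N.E := Set.Subset.trans (by exact_mod_cast hC) hE
  rw [Matroid.isCircuit_iff_forall_ssubset, FamCircuit, h C hC, Matroid.not_indep_iff hCE]
  refine and_congr_right fun _ => ⟨fun hD I hI => ?_, fun hD D hDC => ?_⟩
  · have : I = ((I.toFinite.toFinset : Finset (Fin n)) : Set (Fin n)) := by simp
    rw [this] at hI ⊢
    have hI' := Finset.coe_ssubset.1 hI
    exact (h _ (hI'.1.trans hC)).1 (hD _ hI')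
  · exact (h _ (hDC.1.trans hC)).2 (hD (Finset.coe_ssubset.2 hDC))

theorem toMat_circ (C : Finset (Fin n)) :
    FamCircuit M.bases C ↔ (toMat M).IsCircuit (C : Set (Fin n)) :=
  circ_bridge (E := Finset.univ) (toMat_sub M _) (fun I _ => toMat_indep M I) C (Finset.subset_univ _)

theorem conn_bridge {N : Matroid (Fin n)} {𝔅 : Finset (Finset (Fin n))} {E : Finset (Fin n)}
    (hE : (E : Set (Fin n)) ⊆ N.E)
    (h : ∀ I ⊆ E, (FamIndep 𝔅 I ↔ N.Indep (I : Set (Fin n)))) :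
    FamConnectedOn 𝔅 E ↔ Conn N (E : Set (Fin n)) := by
  constructor
  · intro hc i hi j hj hij
    obtain ⟨C, hCE, hC, h1, h2⟩ := hc i (by exact_mod_cast hi) j (by exact_mod_cast hj) hij
    exact ⟨C, (circ_bridge hE h C hCE).1 hC, by exact_mod_cast hCE, h1, h2⟩
  · intro hc i hi j hj hij
    obtain ⟨C, hC, hCE, h1, h2⟩ := hc i (by exact_mod_cast hi) j (by exact_mod_cast hj) hij
    have : C = ((C.toFinite.toFinset : Finset (Fin n)) : Set (Fin n)) := by simp
    generalize C.toFinite.toFinset = D at this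
    subst this
    have hD : D ⊆ E := by exact_mod_cast hCE
    exact ⟨D, hD, (circ_bridge hE h D hD).2 hC, by exact_mod_cast h1, by exact_mod_cast h2⟩

theorem mem_restrict (G B : Finset (Fin n)) :
    B ∈ M.restrictBases G ↔ (toMat M).IsBasis (B : Set (Fin n)) (G : Set (Fin n)) := by
  classical
  rw [FinMatroid.restrictBases, famRestrictBases, Finset.mem_filter, Finset.mem_powerset,
    toMat_indep]
  constructor
  · rintro ⟨hBG, hB, hmax⟩
    obtain ⟨J, hJ, hBJ⟩ := hB.subset_isBasis_of_subset (X := (G : Set (Fin n)))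
      (by exact_mod_cast hBG) (toMat_sub M _)
    have : J = ((J.toFinite.toFinset : Finset (Fin n)) : Set (Fin n)) := by simp
    generalize J.toFinite.toFinset = D at this
    subst this
    have := hmax D (by exact_mod_cast hJ.subset) ((toMat_indep M D).2 hJ.indep)
      (by exact_mod_cast hBJ)
    exact this ▸ hJ
  · intro h
    refine ⟨by exact_mod_cast h.subset, h.indep, fun B' hB' hi hs => ?_⟩
    exact_mod_cast h.eq_of_subset_indep ((toMat_indep M B').1 hi) (by exact_mod_cast hs)
      (by exact_mod_cast hB')

theorem restrict_indep (G I : Finset (Fin n)) (hI : I ⊆ G) :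
    FamIndep (M.restrictBases G) I ↔ (toMat M).Indep (I : Set (Fin n)) := by
  constructor
  · rintro ⟨B, hB, h⟩
    exact ((mem_restrict M G B).1 hB).indep.subset (by exact_mod_cast h)
  · intro h
    obtain ⟨J, hJ, hBJ⟩ := h.subset_isBasis_of_subset (X := (G : Set (Fin n)))
      (by exact_mod_cast hI) (toMat_sub M _)
    have : J = ((J.toFinite.toFinset : Finset (Fin n)) : Set (Fin n)) := by simp
    generalize J.toFinite.toFinset = D at this
    subst this
    exact ⟨D, (mem_restrict M G D).2 hJ, by exact_mod_cast hBJ⟩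

theorem restrict_conn (G : Finset (Fin n)) :
    FamConnectedOn (M.restrictBases G) G ↔ Conn (toMat M) (G : Set (Fin n)) :=
  conn_bridge (toMat_sub M _) (restrict_indep M G)

theorem card_le_of_basis {N : Matroid (Fin n)} {I J X : Finset (Fin n)} (hI : N.Indep (I : Set (Fin n)))
    (hIX : I ⊆ X) (hJ : N.IsBasis (J : Set (Fin n)) (X : Set (Fin n))) : I.card ≤ J.card := by
  have h := hI.encard_le_eRk_of_subset (X := (X : Set (Fin n))) (by exact_mod_cast hIX)
  rw [← hJ.encard_eq_eRk, Set.encard_coe_eq_coe_finsetCard, Set.encard_coe_eq_coe_finsetCard] at h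
  exact_mod_cast h

theorem basis_of_card {N : Matroid (Fin n)} {I J X : Finset (Fin n)} (hI : N.Indep (I : Set (Fin n)))
    (hIX : I ⊆ X) (hJ : N.IsBasis (J : Set (Fin n)) (X : Set (Fin n))) (h : J.card ≤ I.card) :
    N.IsBasis (I : Set (Fin n)) (X : Set (Fin n)) := by
  obtain ⟨K, hK, hIK⟩ := hI.subset_isBasis_of_subset (X := (X : Set (Fin n)))
      (by exact_mod_cast hIX) hJ.subset_ground
  have : K = ((K.toFinite.toFinset : Finset (Fin n)) : Set (Fin n)) := by simp
  generalize K.toFinite.toFinset = D at this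
  subst this
  have h1 := card_le_of_basis hK.indep (by exact_mod_cast hK.subset) hJ
  have : I = D := Finset.eq_of_subset_of_card_le (by exact_mod_cast hIK) (by omega)
  exact this ▸ hK

theorem restrict_rk {F G J : Finset (Fin n)} (hFG : F ⊆ G)
    (hJ : (toMat M).IsBasis (J : Set (Fin n)) (F : Set (Fin n))) :
    famRk (M.restrictBases G) F = J.card := by
  classical
  have hJF : J ⊆ F := by exact_mod_cast hJ.subset
  apply le_antisymm
  · refine Finset.sup_le fun I hI => ?_
    rw [Finset.mem_filter, Finset.mem_powerset] at hI
    exact card_le_of_basis ((restrict_indep M G I (hI.1.trans hFG)).1 hI.2) hI.1 hJ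
  · refine Finset.le_sup (f := Finset.card) (Finset.mem_filter.2 ⟨Finset.mem_powerset.2 hJF, ?_⟩)
    exact (restrict_indep M G J (hJF.trans hFG)).2 hJ.indep

theorem contract_indep {F G : Finset (Fin n)} (hFG : F ⊆ G) (I : Finset (Fin n)) (hI : I ⊆ G \ F) :
    FamIndep (famContractBases (M.restrictBases G) F) I ↔
      ((toMat M).contract (F : Set (Fin n))).Indep (I : Set (Fin n)) := by
  classical
  obtain ⟨J, hJ⟩ := (toMat M).exists_isBasis (F : Set (Fin n)) (toMat_sub M _)
  have : J = ((J.toFinite.toFinset : Finset (Fin n)) : Set (Fin n)) := by simp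
  generalize J.toFinite.toFinset = D at this
  subst this
  have hDF : D ⊆ F := by exact_mod_cast hJ.subset
  have hrk := restrict_rk M hFG hJ
  have hIF : ∀ x ∈ I, x ∈ G ∧ x ∉ F := fun x hx => Finset.mem_sdiff.1 (hI hx)
  constructor
  · rintro ⟨B', hB', hs⟩
    rw [famContractBases, Finset.mem_image] at hB'
    obtain ⟨B, hB, rfl⟩ := hB'
    rw [Finset.mem_filter, mem_restrict, hrk] at hB
    have hb : (toMat M).IsBasis ((B ∩ F : Finset (Fin n)) : Set (Fin n)) (F : Set (Fin n)) :=
      basis_of_card (hB.1.indep.subset (by exact_mod_cast Finset.inter_subset_left))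
        Finset.inter_subset_right hJ hB.2.ge
    rw [hb.contract_indep_iff]
    constructor
    · apply hB.1.indep.subset
      rw [← Finset.coe_union, Finset.coe_subset]
      exact Finset.union_subset (hs.trans Finset.sdiff_subset) Finset.inter_subset_left
    · rw [Finset.disjoint_coe, Finset.disjoint_left]
      intro x hx hx'
      first
        | exact (hIF x hx).2 hx'
        | exact (hIF x hx').2 hx
  · intro h
    rw [hJ.contract_indep_iff] at h
    obtain ⟨K, hK, hIK⟩ := h.1.subset_isBasis_of_subset (X := (G : Set (Fin n)))
      (by
        rw [← Finset.coe_union, Finset.coe_subset]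
        exact Finset.union_subset (fun x hx => (hIF x hx).1) (hDF.trans hFG)) (toMat_sub M _)
    have : K = ((K.toFinite.toFinset : Finset (Fin n)) : Set (Fin n)) := by simp
    generalize K.toFinite.toFinset = B at this
    subst this
    rw [← Finset.coe_union, Finset.coe_subset] at hIK
    refine ⟨B \ F, ?_, fun x hx => Finset.mem_sdiff.2
      ⟨hIK (Finset.mem_union_left _ hx), (hIF x hx).2⟩⟩
    rw [famContractBases, Finset.mem_image]
    refine ⟨B, Finset.mem_filter.2 ⟨(mem_restrict M G B).2 hK, ?_⟩, rfl⟩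
    rw [hrk]
    apply le_antisymm
    · exact card_le_of_basis (hK.indep.subset (by exact_mod_cast Finset.inter_subset_left))
        Finset.inter_subset_right hJ
    · exact Finset.card_le_card (Finset.subset_inter
        (Finset.subset_union_right.trans hIK) hDF)

theorem contract_sub (F G : Finset (Fin n)) :
    ((G \ F : Finset (Fin n)) : Set (Fin n)) ⊆ ((toMat M).contract (F : Set (Fin n))).E := by
  rw [Matroid.contract_ground, toMat_E, Finset.coe_sdiff]
  exact Set.sdiff_subset_sdiff_left (Set.subset_univ _)

theorem contract_conn {F G : Finset (Fin n)} (hFG : F ⊆ G) :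
    FamConnectedOn (famContractBases (M.restrictBases G) F) (G \ F) ↔
      Conn ((toMat M).contract (F : Set (Fin n))) ((G \ F : Finset (Fin n)) : Set (Fin n)) :=
  conn_bridge (contract_sub M F G) (contract_indep M hFG)

theorem flat_iff (F : Finset (Fin n)) : M.IsFlat F ↔ (toMat M).IsFlat (F : Set (Fin n)) := by
  classical
  rw [Matroid.isFlat_iff_closure_eq]
  constructor
  · intro h
    apply Set.Subset.antisymm _ ((toMat M).subset_closure _ (toMat_sub M _))
    intro e he
    by_contra hne
    obtain ⟨C, hCs, hC, heC⟩ := Matroid.exists_isCircuit_of_mem_closure he hne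
    have : C = ((C.toFinite.toFinset : Finset (Fin n)) : Set (Fin n)) := by simp
    generalize C.toFinite.toFinset = D at this
    subst this
    apply h D ((toMat_circ M D).2 hC)
    rw [Finset.card_eq_one]
    refine ⟨e, ?_⟩
    ext x
    simp only [Finset.mem_sdiff, Finset.mem_singleton]
    constructor
    · rintro ⟨h1, h2⟩
      exact (hCs h1).resolve_right h2
    · rintro rfl
      exact ⟨heC, hne⟩
  · intro h C hC h1
    obtain ⟨e, he⟩ := Finset.card_eq_one.1 h1
    have heC : e ∈ C \ F := by rw [he]; simp
    rw [Finset.mem_sdiff] at heC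
    have hm := ((toMat_circ M C).1 hC).mem_closure_sdiff_singleton_of_mem (e := e) heC.1
    have : e ∈ (toMat M).closure (F : Set (Fin n)) := by
      apply (toMat M).closure_subset_closure _ hm
      intro x ⟨hx, hxe⟩
      by_contra hxF
      have : x ∈ C \ F := Finset.mem_sdiff.2 ⟨hx, hxF⟩
      rw [he] at this
      exact hxe (by simpa using this)
    rw [h] at this
    exact heC.2 this

theorem closure_eq (X : Finset (Fin n)) :
    ((M.closure X : Finset (Fin n)) : Set (Fin n)) = (toMat M).closure (X : Set (Fin n)) := by
  classical
  ext e
  simp only [FinMatroid.closure, Finset.coe_filter, Finset.mem_univ, true_and]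
  constructor
  · intro h
    have := h (((toMat M).closure (X : Set (Fin n))).toFinite.toFinset)
      ((flat_iff M _).2 (by simpa using (toMat M).isFlat_closure _))
      (by
        rw [← Finset.coe_subset]
        simpa using (toMat M).subset_closure _ (toMat_sub M _))
    simpa using this
  · intro h F hF hXF
    have h1 := (toMat M).closure_subset_closure (Finset.coe_subset.2 hXF) h
    rw [((flat_iff M F).1 hF).closure] at h1
    exact_mod_cast h1

theorem loopless (hn : 2 ≤ n) (hconn : M.Connected) : (toMat M).closure ∅ = ∅ := by
  rw [Set.eq_empty_iff_forall_notMem]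
  intro e he
  obtain ⟨C, hCs, hC, heC⟩ := Matroid.exists_isCircuit_of_mem_closure he (by simp)
  have hCe : C ⊆ {e} := by simpa using hCs
  obtain ⟨j, hj⟩ : ∃ j : Fin n, e ≠ j := by
    have : Nontrivial (Fin n) := Fin.nontrivial_iff_two_le.2 hn
    obtain ⟨j, hj⟩ := exists_ne e
    exact ⟨j, hj.symm⟩
  obtain ⟨D, hD, heD, hjD⟩ := hconn e j hj
  have hD' := (toMat_circ M D).1 hD
  have := hC.eq_of_subset_isCircuit hD' (hCe.trans (by simpa using heD))
  subst this
  have hje : j = e := by simpa using hCe hjD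
  exact hj hje.symm

end

section
variable {n r : ℕ} {M : FinMatroid n r} {S : Finset (Finset (Fin n))} {c : Finset (Fin n) → ℝ}

theorem wt_eq (S : Finset (Finset (Fin n))) (c : Finset (Fin n) → ℝ) (B : Finset (Fin n)) :
    ∑ i ∈ B, ∑ G ∈ S, c G * indVec G i = ∑ G ∈ S, c G * ((B ∩ G).card : ℝ) := by
  rw [Finset.sum_comm]
  refine Finset.sum_congr rfl fun G _ => ?_
  rw [← Finset.mul_sum]
  congr 1
  simp [indVec, Finset.sum_ite_mem]

theorem mem_max (hL : (toMat M).closure ∅ = ∅) (hS : Nest (toMat M) S) (hu : Finset.univ ∈ S)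
    (hc : ∀ G ∈ S.erase Finset.univ, 0 < c G) (B : Finset (Fin n)) :
    B ∈ M.maxBases (fun i => ∑ G ∈ S.erase Finset.univ, c G * indVec G i) ↔
      ∀ G ∈ S, (toMat M).IsBasis ((B : Set (Fin n)) ∩ (G : Set (Fin n))) (G : Set (Fin n)) := by
  classical
  have hbase : ∀ B : Finset (Fin n), (∀ G ∈ S, (toMat M).IsBasis
      ((B : Set (Fin n)) ∩ (G : Set (Fin n))) (G : Set (Fin n))) → B ∈ M.bases := by
    intro B hB
    have := hB _ hu
    rw [Finset.coe_univ, Set.inter_univ, ← toMat_E M, Matroid.isBasis_ground_iff] at this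
    exact (toMat_base M B).1 this
  have hle : ∀ B B' : Finset (Fin n), B' ∈ M.bases → ∀ G : Finset (Fin n), (toMat M).IsBasis
      ((B : Set (Fin n)) ∩ (G : Set (Fin n))) (G : Set (Fin n)) →
      (B' ∩ G).card ≤ (B ∩ G).card := by
    intro B B' hB' G hG
    rw [← Finset.coe_inter] at hG
    exact card_le_of_basis (((toMat_base M B').2 hB').indep.subset
      (by exact_mod_cast Finset.inter_subset_left)) Finset.inter_subset_right hG
  rw [FinMatroid.maxBases, Finset.mem_filter]
  simp only [wt_eq]
  constructor
  · rintro ⟨hB, hmax⟩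
    obtain ⟨B₀', -, hB₀⟩ := hS.exists_base (toMat_E M) hL hu ∅ (by simp)
    have : B₀' = ((B₀'.toFinite.toFinset : Finset (Fin n)) : Set (Fin n)) := by simp
    generalize B₀'.toFinite.toFinset = B₀ at this
    subst this
    have hb0 := hbase B₀ hB₀
    have hterm : ∀ G ∈ S.erase Finset.univ,
        c G * ((B ∩ G).card : ℝ) ≤ c G * ((B₀ ∩ G).card : ℝ) := by
      intro G hG
      apply mul_le_mul_of_nonneg_left _ (hc G hG).le
      exact_mod_cast hle B₀ B hB G (hB₀ G (Finset.mem_of_mem_erase hG))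
    have heq := (Finset.sum_eq_sum_iff_of_le hterm).1
      (le_antisymm (Finset.sum_le_sum hterm) (hmax B₀ hb0))
    intro G hG
    by_cases hGu : G = Finset.univ
    · subst hGu
      rw [Finset.coe_univ, Set.inter_univ, ← toMat_E M, Matroid.isBasis_ground_iff]
      exact (toMat_base M B).2 hB
    · have hG' := Finset.mem_erase.2 ⟨hGu, hG⟩
      have h1 := mul_left_cancel₀ (hc G hG').ne' (heq G hG')
      have h2 := hB₀ G hG
      rw [← Finset.coe_inter] at h2 ⊢
      exact basis_of_card (((toMat_base M B).2 hB).indep.subset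
        (by exact_mod_cast Finset.inter_subset_left)) Finset.inter_subset_right h2
        (by exact_mod_cast h1.ge)
  · intro hB
    refine ⟨hbase B hB, fun B' hB' => Finset.sum_le_sum fun G hG => ?_⟩
    apply mul_le_mul_of_nonneg_left _ (hc G hG).le
    exact_mod_cast hle B B' hB' G (hB G (Finset.mem_of_mem_erase hG))

theorem max_indep (hL : (toMat M).closure ∅ = ∅) (hS : Nest (toMat M) S) (hu : Finset.univ ∈ S)
    (hc : ∀ G ∈ S.erase Finset.univ, 0 < c G) (I : Finset (Fin n)) :
    FamIndep (M.maxBases (fun i => ∑ G ∈ S.erase Finset.univ, c G * indVec G i)) I ↔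
      ∀ G ∈ S, ((toMat M).contract (low S G : Set (Fin n))).Indep
        ((I ∩ (G \ low S G) : Finset (Fin n)) : Set (Fin n)) := by
  simp only [Finset.coe_inter]
  constructor
  · rintro ⟨B, hB, hIB⟩
    rw [mem_max hL hS hu hc] at hB
    exact indep_of_base (by exact_mod_cast hIB) hB
  · intro h
    obtain ⟨B', hIB, hB⟩ := hS.exists_base (toMat_E M) hL hu I h
    have : B' = ((B'.toFinite.toFinset : Finset (Fin n)) : Set (Fin n)) := by simp
    generalize B'.toFinite.toFinset = B at this
    subst this
    exact ⟨B, (mem_max hL hS hu hc B).2 hB, by exact_mod_cast hIB⟩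

theorem max_indep_part (hL : (toMat M).closure ∅ = ∅) (hS : Nest (toMat M) S)
    (hu : Finset.univ ∈ S) (hc : ∀ G ∈ S.erase Finset.univ, 0 < c G) {G : Finset (Fin n)}
    (hG : G ∈ S) (I : Finset (Fin n)) (hI : I ⊆ G \ low S G) :
    FamIndep (M.maxBases (fun i => ∑ G ∈ S.erase Finset.univ, c G * indVec G i)) I ↔
      ((toMat M).contract (low S G : Set (Fin n))).Indep (I : Set (Fin n)) := by
  rw [max_indep hL hS hu hc]
  constructor
  · intro h
    have := h G hG
    rwa [Finset.inter_eq_left.2 hI] at this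
  · intro h G' hG'
    by_cases hGG : G = G'
    · subst hGG
      rwa [Finset.inter_eq_left.2 hI]
    · have : I ∩ (G' \ low S G') = ∅ := by
        rw [Finset.eq_empty_iff_forall_notMem]
        intro x hx
        rw [Finset.mem_inter] at hx
        exact hGG (hS.part_unique (toMat_E M) hL hG hG' (hI hx.1) hx.2)
      rw [this]
      simp

theorem max_circ_part (hL : (toMat M).closure ∅ = ∅) (hS : Nest (toMat M) S)
    (hu : Finset.univ ∈ S) (hc : ∀ G ∈ S.erase Finset.univ, 0 < c G) {G : Finset (Fin n)}
    (hG : G ∈ S) (C : Finset (Fin n)) (hC : C ⊆ G \ low S G) :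
    FamCircuit (M.maxBases (fun i => ∑ G ∈ S.erase Finset.univ, c G * indVec G i)) C ↔
      ((toMat M).contract (low S G : Set (Fin n))).IsCircuit (C : Set (Fin n)) :=
  circ_bridge (contract_sub M _ _) (max_indep_part hL hS hu hc hG) C hC

theorem max_circ_sub (hL : (toMat M).closure ∅ = ∅) (hS : Nest (toMat M) S)
    (hu : Finset.univ ∈ S) (hc : ∀ G ∈ S.erase Finset.univ, 0 < c G) {C : Finset (Fin n)}
    (hC : FamCircuit (M.maxBases (fun i => ∑ G ∈ S.erase Finset.univ, c G * indVec G i)) C) :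
    ∃ G ∈ S, C ⊆ G \ low S G := by
  have h1 := hC.1
  rw [max_indep hL hS hu hc] at h1
  push Not at h1
  obtain ⟨G, hG, hd⟩ := h1
  refine ⟨G, hG, ?_⟩
  by_contra hn
  have hss : C ∩ (G \ low S G) ⊂ C := by
    refine ⟨Finset.inter_subset_left, fun h => hn (h.trans Finset.inter_subset_right)⟩
  exact hd ((max_indep_part hL hS hu hc hG _ Finset.inter_subset_right).1 (hC.2 _ hss))

/-- Number of components of `M_w` is `|S|` iff all local contractions are connected
(in the generated-equivalence sense). -/
theorem num_comp (hL : (toMat M).closure ∅ = ∅) (hS : Nest (toMat M) S)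
    (hu : Finset.univ ∈ S) (hc : ∀ G ∈ S.erase Finset.univ, 0 < c G) :
    famNumComponents (M.maxBases (fun i => ∑ G ∈ S.erase Finset.univ, c G * indVec G i)) = S.card ↔
      ∀ G ∈ S, Conn ((toMat M).contract (low S G : Set (Fin n)))
        ((G \ low S G : Finset (Fin n)) : Set (Fin n)) := by
  classical
  set 𝔅 := M.maxBases (fun i => ∑ G ∈ S.erase Finset.univ, c G * indVec G i) with h𝔅
  have hE := toMat_E M
  choose ν hνS hν using fun i : Fin n => exists_part (S := S) hu i
  have hνeq : ∀ i G, G ∈ S → i ∈ G \ low S G → ν i = G := fun i G hG hi =>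
    hS.part_unique hE hL (hνS i) hG (hν i) hi
  have hrel : ∀ i j, FamConnRel 𝔅 i j → ν i = ν j := by
    rintro i j (rfl | ⟨C, hC, hi, hj⟩)
    · rfl
    · obtain ⟨G, hG, hs⟩ := max_circ_sub hL hS hu hc hC
      rw [hνeq i G hG (hs hi), hνeq j G hG (hs hj)]
  let f : Quot (FamConnRel 𝔅) → S := Quot.lift (fun i => ⟨ν i, hνS i⟩)
    (fun i j h => Subtype.ext (hrel i j h))
  have hfsurj : Function.Surjective f := by
    rintro ⟨G, hG⟩
    have hne := hS.low_ne hE hL hG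
    obtain ⟨x, hx⟩ : ∃ x, x ∈ G \ low S G := by
      by_contra hcon
      push Not at hcon
      apply hne
      apply Finset.Subset.antisymm low_subset
      intro x hx
      by_contra hxl
      exact hcon x (Finset.mem_sdiff.2 ⟨hx, hxl⟩)
    exact ⟨Quot.mk _ x, Subtype.ext (hνeq x G hG hx)⟩
  haveI : Finite (Quot (FamConnRel 𝔅)) := Quot.finite _
  have hcardS : Nat.card S = S.card := by simp
  have hiff : famNumComponents 𝔅 = S.card ↔ Function.Injective f := by
    rw [famNumComponents, ← hcardS]
    constructor
    · intro h
      exact (Function.Surjective.bijective_of_nat_card_le hfsurj h.le).1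
    · intro h
      exact Nat.card_eq_of_bijective f ⟨h, hfsurj⟩
  rw [hiff]
  constructor
  · intro hinj G hG
    have key : ∀ i j, Relation.EqvGen (FamConnRel 𝔅) i j → i ∈ G \ low S G →
        j ∈ comp ((toMat M).contract (low S G : Set (Fin n)))
          ((G \ low S G : Finset (Fin n)) : Set (Fin n)) i := by
      have hν2 : ∀ i j, Relation.EqvGen (FamConnRel 𝔅) i j → ν i = ν j := by
        intro i j h
        induction h with
        | rel i j h => exact hrel i j h
        | refl i => rfl
        | symm i j _ ih => exact ih.symm
        | trans i j k _ _ h1 h2 => exact h1.trans h2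
      have hmem : ∀ i j, ν i = ν j → i ∈ G \ low S G → j ∈ G \ low S G := by
        intro i j h hi
        have := hν j
        rwa [← h, hνeq i G hG hi] at this
      intro i j h
      induction h with
      | rel i j h =>
        intro hi
        have hj := hmem i j (hrel i j h) hi
        rcases h with rfl | ⟨C, hC, hiC, hjC⟩
        · exact mem_comp_self (by exact_mod_cast hi)
        · obtain ⟨G', hG', hs⟩ := max_circ_sub hL hS hu hc hC
          have : G' = G := hS.part_unique hE hL hG' hG (hs hiC) hi
          subst this
          refine ⟨by exact_mod_cast hj, Or.inr ⟨C, (max_circ_part hL hS hu hc hG C hs).1 hC,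
            by exact_mod_cast hs, hiC, hjC⟩⟩
      | refl i => exact fun hi => mem_comp_self (by exact_mod_cast hi)
      | symm i j h ih =>
        intro hj
        have hi := hmem j i (hν2 i j h).symm hj
        rcases (ih hi).2 with rfl | ⟨C, h1, h2, h3, h4⟩
        · exact mem_comp_self (by exact_mod_cast hi)
        · exact ⟨by exact_mod_cast hi, Or.inr ⟨C, h1, h2, h4, h3⟩⟩
      | trans i j k h1 h2 ih1 ih2 =>
        intro hi
        have hj := hmem i j (hν2 i j h1) hi
        exact conn_subset_comp comp_conn comp_subset (mem_comp_self (by exact_mod_cast hj))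
          (ih1 hi) (ih2 hj)
    intro i hi j hj hij
    have hi' : i ∈ G \ low S G := by exact_mod_cast hi
    have hj' : j ∈ G \ low S G := by exact_mod_cast hj
    have : (Quot.mk (FamConnRel 𝔅) i) = Quot.mk _ j := by
      apply hinj
      apply Subtype.ext
      change ν i = ν j
      rw [hνeq i G hG hi', hνeq j G hG hj']
    rcases (key i j (Quot.eqvGen_exact this) hi').2 with h | h
    · exact absurd h hij
    · exact h
  · intro hcon a b hab
    induction a using Quot.ind with | mk i =>
    induction b using Quot.ind with | mk j =>
    have hνij : ν i = ν j := congrArg Subtype.val hab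
    by_cases hij : i = j
    · rw [hij]
    apply Quot.sound
    have hj := hν j
    rw [← hνij] at hj
    obtain ⟨C, hC, hCs, hiC, hjC⟩ := hcon (ν i) (hνS i) i (by exact_mod_cast hν i) j
      (by exact_mod_cast hj) hij
    have : C = ((C.toFinite.toFinset : Finset (Fin n)) : Set (Fin n)) := by simp
    generalize C.toFinite.toFinset = D at this
    subst this
    exact Or.inr ⟨D, (max_circ_part hL hS hu hc (hνS i) D (by exact_mod_cast hCs)).2 hC,
      by exact_mod_cast hiC, by exact_mod_cast hjC⟩

/-- The nested set built from the components of a flat `F ⊂ G`. -/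
theorem exists_nest (hL : (toMat M).closure ∅ = ∅)
    (hcu : Conn (toMat M) (Set.univ)) (hn : 0 < n) {F G : Finset (Fin n)}
    (hF : (toMat M).IsFlat (F : Set (Fin n))) (hG : (toMat M).IsFlat (G : Set (Fin n)))
    (hFG : F ⊂ G) (hGc : Conn (toMat M) (G : Set (Fin n))) :
    ∃ S : Finset (Finset (Fin n)), Nest (toMat M) S ∧ Finset.univ ∈ S ∧ G ∈ S ∧ low S G = F := by
  classical
  let K : Fin n → Finset (Fin n) := fun i => (comp (toMat M) (F : Set (Fin n)) i).toFinite.toFinset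
  have hK : ∀ i, (K i : Set (Fin n)) = comp (toMat M) (F : Set (Fin n)) i := fun i => by simp [K]
  have hKF : ∀ i, K i ⊆ F := fun i => by
    rw [← Finset.coe_subset, hK]; exact comp_subset
  have hKi : ∀ i ∈ F, i ∈ K i := fun i hi => by
    rw [← Finset.mem_coe, hK]; exact mem_comp_self (by exact_mod_cast hi)
  let S : Finset (Finset (Fin n)) := insert Finset.univ (insert G (F.image K))
  have hcases : ∀ A ∈ S, A = Finset.univ ∨ A = G ∨ ∃ i ∈ F, A = K i := by
    intro A hA
    simp only [S, Finset.mem_insert, Finset.mem_image] at hA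
    rcases hA with h | h | ⟨i, hi, h⟩
    · exact Or.inl h
    · exact Or.inr (Or.inl h)
    · exact Or.inr (Or.inr ⟨i, hi, h.symm⟩)
  obtain ⟨g, hgG, hgF⟩ := Finset.exists_of_ssubset hFG
  refine ⟨S, ⟨?_, ?_, ?_, ?_⟩, by simp [S], by simp [S], ?_⟩
  · intro A hA
    rcases hcases A hA with rfl | rfl | ⟨i, hi, rfl⟩
    · rw [Finset.coe_univ, ← toMat_E M]; exact (toMat M).ground_isFlat
    · exact hG
    · rw [hK]; exact comp_flat hL hF
  · intro A hA
    rcases hcases A hA with rfl | rfl | ⟨i, hi, rfl⟩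
    · exact ⟨g, Finset.mem_univ _⟩
    · exact ⟨g, hgG⟩
    · exact ⟨i, hKi i hi⟩
  · intro A hA
    rcases hcases A hA with rfl | rfl | ⟨i, hi, rfl⟩
    · rw [Finset.coe_univ]; exact hcu
    · exact hGc
    · rw [hK]; exact comp_conn
  · intro T hT h2 hanti hcon
    have hle : ∀ A ∈ S, ∀ A' ∈ S, A' = G → A ⊆ A' ∨ A' ⊆ A := by
      rintro A hA A' hA' rfl
      rcases hcases A hA with rfl | rfl | ⟨i, hi, rfl⟩
      · exact Or.inr (Finset.subset_univ _)
      · exact Or.inl (Finset.Subset.refl _)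
      · exact Or.inl ((hKF i).trans hFG.1)
    have hother : ∀ A ∈ T, ∃ B ∈ T, A ≠ B := by
      intro A hA
      obtain ⟨B, hB, hne⟩ := Finset.exists_mem_ne (by omega : 1 < T.card) A
      exact ⟨B, hB, hne.symm⟩
    have hTK : ∀ A ∈ T, ∃ i ∈ F, A = K i := by
      intro A hA
      obtain ⟨B, hB, hne⟩ := hother A hA
      have hab := hanti A hA B hB hne
      rcases hcases A (hT hA) with rfl | rfl | h
      · exact absurd (Finset.subset_univ _) hab.2
      · rcases hle B (hT hB) A (hT hA) rfl with h | h
        · exact absurd h hab.2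
        · exact absurd h hab.1
      · exact h
    obtain ⟨A, hA⟩ : T.Nonempty := Finset.card_pos.1 (by omega)
    obtain ⟨B, hB, hne⟩ := hother A hA
    obtain ⟨i, hi, rfl⟩ := hTK A hA
    obtain ⟨j, hj, rfl⟩ := hTK B hB
    have hsupF : T.sup id ⊆ F := by
      intro x hx
      obtain ⟨H, hH, hxH⟩ := mem_supid.1 hx
      obtain ⟨l, hl, rfl⟩ := hTK H hH
      exact hKF l hxH
    have hclF : (toMat M).closure ((T.sup id : Finset (Fin n)) : Set (Fin n)) ⊆ F := by
      rw [← hF.closure]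
      exact (toMat M).closure_subset_closure (by exact_mod_cast hsupF)
    have hin : ∀ A ∈ T, ∀ x ∈ A,
        x ∈ (toMat M).closure ((T.sup id : Finset (Fin n)) : Set (Fin n)) := fun A hA x hx =>
      (toMat M).subset_closure _ (toMat_sub M _) (by exact_mod_cast mem_supid.2 ⟨A, hA, hx⟩)
    have hsub := conn_subset_comp (i := i) hcon hclF (hin _ hA i (hKi i hi))
      (mem_comp_self (by exact_mod_cast hi))
    rw [← hK] at hsub
    have : K j ⊆ K i := fun x hx => hsub (hin _ hB x hx)
    exact (hanti _ hA _ hB hne).2 this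
  · ext x
    rw [mem_low]
    constructor
    · rintro ⟨H, hH, hHG, hx⟩
      rcases hcases H hH with rfl | rfl | ⟨i, hi, rfl⟩
      · exact absurd (Finset.subset_univ _) hHG.2
      · exact absurd (Finset.Subset.refl _) hHG.2
      · exact hKF i hx
    · intro hx
      refine ⟨K x, ?_, lt_of_le_of_lt (hKF x) hFG, hKi x hx⟩
      simp only [S, Finset.mem_insert, Finset.mem_image]
      exact Or.inr (Or.inr ⟨x, hx, rfl⟩)

theorem nest_iff {𝓖min : Set (Finset (Fin n))}
    (hGmin : 𝓖min = {G : Finset (Fin n) |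
      M.IsFlat G ∧ G ≠ ∅ ∧ FamConnectedOn (M.restrictBases G) G}) :
    M.IsNested 𝓖min S ↔ Nest (toMat M) S := by
  subst hGmin
  have hcl : ∀ X : Finset (Fin n), FamConnectedOn (M.restrictBases (M.closure X)) (M.closure X) ↔
      Conn (toMat M) ((toMat M).closure (X : Set (Fin n))) := by
    intro X; rw [restrict_conn, closure_eq]
  constructor
  · rintro ⟨h1, h2⟩
    have hne : ∀ G ∈ S, G.Nonempty := fun G hG => Finset.nonempty_iff_ne_empty.2 (h1 hG).2.1
    refine ⟨fun G hG => (flat_iff M G).1 (h1 hG).1, hne,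
      fun G hG => (restrict_conn M G).1 (h1 hG).2.2, ?_⟩
    intro T hT hc ha hcon
    apply h2 T hT hc ha
    refine ⟨?_, ?_, (hcl _).2 hcon⟩
    · rw [flat_iff, closure_eq]; exact (toMat M).isFlat_closure _
    · obtain ⟨A, hA⟩ : T.Nonempty := Finset.card_pos.1 (by omega)
      obtain ⟨x, hx⟩ := hne A (hT hA)
      apply Finset.Nonempty.ne_empty
      refine ⟨x, ?_⟩
      rw [← Finset.mem_coe, closure_eq]
      exact (toMat M).subset_closure _ (toMat_sub M _) (by exact_mod_cast mem_supid.2 ⟨A, hA, hx⟩)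
  · intro h
    refine ⟨fun G hG => ⟨(flat_iff M G).2 (h.flat G hG), (h.ne G hG).ne_empty,
      (restrict_conn M G).2 (h.conn G hG)⟩, fun T hT hc ha hm => ?_⟩
    exact h.nest T hT hc ha ((hcl _).1 hm.2.2)
end

end S17

/-- For a connected matroid `M` of rank `r` on `[n]`, `n ≥ 2`, with
`𝓖min` the minimal building set of connected flats, the following are equivalent:
(a) for all flats `F ⊊ G` with `M|G` connected, `(M|G)/F` is connected;
(b) for every nested set `S ∋ [n]` with respect to `𝓖min` and every
`w = ∑_{G ∈ S, G ≠ [n]} c_G e_G` with `c_G > 0`, the matroid `M_w` has exactly `|S|`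
connected components (i.e. the nested set complex equals the Bergman complex). -/
theorem statement17 {n r : ℕ} (M : FinMatroid n r) (hn : 2 ≤ n)
    (hconn : M.Connected) (𝓖min : Set (Finset (Fin n)))
    (hGmin : 𝓖min = {G : Finset (Fin n) |
      M.IsFlat G ∧ G ≠ ∅ ∧ FamConnectedOn (M.restrictBases G) G}) :
    (∀ F G : Finset (Fin n), M.IsFlat F → M.IsFlat G → F ⊂ G →
        FamConnectedOn (M.restrictBases G) G →
        FamConnectedOn (famContractBases (M.restrictBases G) F) (G \ F)) ↔
      (∀ S : Finset (Finset (Fin n)), M.IsNested 𝓖min S → Finset.univ ∈ S →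
        ∀ c : Finset (Fin n) → ℝ, (∀ G ∈ S.erase Finset.univ, 0 < c G) →
          famNumComponents (M.maxBases
            (fun i => ∑ G ∈ S.erase Finset.univ, c G * indVec G i)) = S.card) := by
  have hL := S17.loopless M hn hconn
  constructor
  · intro ha S hS hu c hc
    rw [S17.nest_iff hGmin] at hS
    rw [S17.num_comp hL hS hu hc]
    intro G hG
    rw [← S17.contract_conn M S17.low_subset]
    refine ha _ G ((S17.flat_iff M _).2 ?_) ((S17.flat_iff M G).2 (hS.flat G hG))
      (lt_of_le_of_ne S17.low_subset (hS.low_ne (S17.toMat_E M) hL hG))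
      ((S17.restrict_conn M G).2 (hS.conn G hG))
    rw [Matroid.isFlat_iff_closure_eq]
    exact hS.low_flat (S17.toMat_E M) hL G
  · intro hb F G hF hG hFG hGc
    have hcu : S17.Conn (S17.toMat M) Set.univ := by
      intro i _ j _ hij
      obtain ⟨C, hC, h1, h2⟩ := hconn i j hij
      exact ⟨C, (S17.toMat_circ M C).1 hC, Set.subset_univ _, h1, h2⟩
    obtain ⟨S, hS, hu, hGS, hlow⟩ := S17.exists_nest hL hcu (by omega)
      ((S17.flat_iff M F).1 hF) ((S17.flat_iff M G).1 hG) hFG ((S17.restrict_conn M G).1 hGc)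
    have h1 := hb S ((S17.nest_iff hGmin).2 hS) hu (fun _ => 1) (fun _ _ => one_pos)
    have h2 := (S17.num_comp (c := fun _ => 1) hL hS hu (fun _ _ => one_pos)).1 h1 G hGS
    rw [hlow] at h2
    exact (S17.contract_conn M hFG.1).2 h2
end

section
/- Let 𝓕 be a building set in the Boolean lattice 2^[r] with [r] ∈ 𝓕, and let S ⊆ 𝓕 ∖ {[r]} be nested with respect to 𝓕. Then: (i) any two members of S are either disjoint or comparable by inclusion; (ii) |S| ≤ r − 1; and (iii) if S is maximal under inclusion among subsets of 𝓕 ∖ {[r]} nested with respect to 𝓕, then |S| = r − 1. -/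
open Finset Pointwise

section Aux19

variable {r : ℕ}

theorem aux_decomp {𝓕 : Set (Finset (Fin r))} (hb : BoolBuilding 𝓕) {X : Finset (Fin r)}
    (hX : X ≠ ∅) : ∃ (k : ℕ) (g : Fin k → Finset (Fin r)),
      (∀ i, g i ∈ 𝓕 ∧ g i ⊆ X) ∧ (∀ H ∈ 𝓕, H ⊆ X → ∃ i, H ⊆ g i) ∧
      (∀ x ∈ X, ∃ i, x ∈ g i) ∧ (∀ i j x, x ∈ g i → x ∈ g j → i = j) := by
  classical
  obtain ⟨k, g, -, h1, -, h3, e, he⟩ := hb.2 X hX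
  refine ⟨k, g, h1, h3, ?_, ?_⟩
  · intro x hx
    obtain ⟨y, hy⟩ := e.surjective ⟨X, subset_rfl⟩
    have h := he y
    rw [hy] at h
    have hx' : x ∈ Finset.univ.sup fun i => (y i).1 := by rw [← h]; exact hx
    rw [Finset.mem_sup] at hx'
    obtain ⟨i, -, hi⟩ := hx'
    exact ⟨i, (y i).2 hi⟩
  · intro i j x hi hj
    by_contra hij
    let y : ∀ m, x ∈ g m → ∀ i : Fin k, {F : Finset (Fin r) // F ⊆ g i} := fun m hm i =>
      if h : i = m then ⟨{x}, by subst h; simpa using hm⟩ else ⟨∅, by simp⟩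
    have key : ∀ m hm, (e (y m hm)).1 = {x} := by
      intro m hm
      rw [he]
      apply le_antisymm
      · apply Finset.sup_le
        intro i _
        by_cases h : i = m <;> simp [y, h]
      · have : ({x} : Finset (Fin r)) = (y m hm m).1 := by simp [y]
        rw [this]
        exact Finset.le_sup (f := fun i => (y m hm i).1) (Finset.mem_univ m)
    have h1 : y i hi = y j hj := e.injective (Subtype.ext ((key i hi).trans (key j hj).symm))
    have h2 := congrArg Subtype.val (congrFun h1 i)
    simp [y, hij] at h2

theorem aux_singleton {𝓕 : Set (Finset (Fin r))} (hb : BoolBuilding 𝓕) (a : Fin r) :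
    {a} ∈ 𝓕 := by
  obtain ⟨k, g, h1, -, h3, -⟩ := aux_decomp hb (X := {a}) (by simp)
  obtain ⟨i, hi⟩ := h3 a (by simp)
  have : g i = {a} := subset_antisymm (h1 i).2 (by simpa using hi)
  exact this ▸ (h1 i).1

theorem aux_union {𝓕 : Set (Finset (Fin r))} (hb : BoolBuilding 𝓕) {A B : Finset (Fin r)}
    (hA : A ∈ 𝓕) (hB : B ∈ 𝓕) {x : Fin r} (hxA : x ∈ A) (hxB : x ∈ B) : A ∪ B ∈ 𝓕 := by
  obtain ⟨k, g, h1, h2, -, h4⟩ := aux_decomp hb (X := A ∪ B)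
    (Finset.ne_empty_of_mem (Finset.mem_union_left _ hxA))
  obtain ⟨i, hi⟩ := h2 A hA Finset.subset_union_left
  obtain ⟨j, hj⟩ := h2 B hB Finset.subset_union_right
  have hij := h4 i j x (hi hxA) (hj hxB)
  subst hij
  have : g i = A ∪ B := subset_antisymm (h1 i).2 (Finset.union_subset hi hj)
  exact this ▸ (h1 i).1

theorem aux_mono {𝓕 : Set (Finset (Fin r))} {S T : Finset (Finset (Fin r))}
    (hS : BoolNested 𝓕 S) (h : T ⊆ S) : BoolNested 𝓕 T :=
  ⟨fun _ hx => hS.1 (h hx), fun U hU => hS.2 U (hU.trans h)⟩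

theorem aux_top {𝓕 : Set (Finset (Fin r))} (htop : Finset.univ ∈ 𝓕)
    {S : Finset (Finset (Fin r))} (hS : BoolNested 𝓕 S) :
    BoolNested 𝓕 (insert Finset.univ S) := by
  classical
  refine ⟨?_, ?_⟩
  · intro x hx
    rcases Finset.mem_insert.1 (Finset.mem_coe.1 hx) with rfl | h
    · exact htop
    · exact hS.1 h
  · intro T hT hc ha
    have hu : Finset.univ ∉ T := by
      intro hu
      obtain ⟨B, hB, hne⟩ := Finset.exists_mem_ne hc Finset.univ
      exact (ha B hB _ hu hne).1 (Finset.subset_univ _)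
    refine hS.2 T ?_ hc ha
    intro x hx
    rcases Finset.mem_insert.1 (hT hx) with rfl | h
    · exact absurd hx hu
    · exact h

theorem aux_laminar {𝓕 : Set (Finset (Fin r))} (hb : BoolBuilding 𝓕)
    {S : Finset (Finset (Fin r))} (hS : BoolNested 𝓕 S) {A B : Finset (Fin r)}
    (hA : A ∈ S) (hB : B ∈ S) {x : Fin r} (hxA : x ∈ A) (hxB : x ∈ B) : A ⊆ B ∨ B ⊆ A := by
  classical
  by_contra hn
  push Not at hn
  have hne : A ≠ B := fun h => hn.1 (h ▸ subset_rfl)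
  refine hS.2 {A, B} ?_ (by rw [Finset.card_pair hne]) ?_ ?_
  · intro C hC
    simp only [Finset.mem_insert, Finset.mem_singleton] at hC
    rcases hC with rfl | rfl <;> assumption
  · intro C hC D hD hCD
    simp only [Finset.mem_insert, Finset.mem_singleton] at hC hD
    rcases hC with rfl | rfl <;> rcases hD with rfl | rfl
    · exact absurd rfl hCD
    · exact hn
    · exact hn.symm
    · exact absurd rfl hCD
  · have : ({A, B} : Finset (Finset (Fin r))).sup id = A ∪ B := by simp
    rw [this]
    exact aux_union hb (hS.1 hA) (hS.1 hB) hxA hxB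

theorem aux_elem {𝓕 : Set (Finset (Fin r))} (hb : BoolBuilding 𝓕)
    {S : Finset (Finset (Fin r))} (hS : BoolNested 𝓕 S) {A : Finset (Fin r)}
    (hA : A ∈ S) : ∃ x ∈ A, ∀ B ∈ S, B ⊂ A → x ∉ B := by
  classical
  by_contra hn
  push Not at hn
  let P := S.filter (fun B => B ⊂ A)
  let T := P.filter (fun B => ∀ C ∈ P, B ⊆ C → B = C)
  have hTA : ∀ B ∈ T, B ⊂ A := fun B hB =>
    (Finset.mem_filter.1 (Finset.mem_filter.1 hB).1).2
  have hcov : ∀ x ∈ A, ∃ B ∈ T, x ∈ B := by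
    intro x hx
    obtain ⟨B, hB, hBA, hxB⟩ := hn x hx
    obtain ⟨C, hBC, hC⟩ := P.exists_le_maximal (a := B) (Finset.mem_filter.2 ⟨hB, hBA⟩)
    refine ⟨C, Finset.mem_filter.2 ⟨hC.1, fun D hD h => subset_antisymm h (hC.2 hD h)⟩,
      hBC hxB⟩
  have hsup : T.sup id = A := by
    ext x
    simp only [Finset.mem_sup, id]
    exact ⟨fun ⟨B, hB, hx⟩ => (hTA B hB).1 hx, hcov x⟩
  refine hS.2 T ?_ ?_ ?_ (hsup ▸ hS.1 hA)
  · intro B hB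
    exact (Finset.mem_filter.1 (Finset.mem_filter.1 hB).1).1
  · by_contra hc
    obtain ⟨x, hx⟩ := Finset.nonempty_iff_ne_empty.2 (hb.1 A (hS.1 hA))
    obtain ⟨B, hB, hxB⟩ := hcov x hx
    apply (hTA B hB).2
    intro y hy
    obtain ⟨C, hC, hyC⟩ := hcov y hy
    have : C = B := Finset.card_le_one.1 (by omega) C hC B hB
    exact this ▸ hyC
  · intro B hB C hC hne
    exact ⟨fun h => hne ((Finset.mem_filter.1 hB).2 C (Finset.mem_filter.1 hC).1 h),
      fun h => hne ((Finset.mem_filter.1 hC).2 B (Finset.mem_filter.1 hB).1 h).symm⟩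

theorem aux_card_le {𝓕 : Set (Finset (Fin r))} (hb : BoolBuilding 𝓕)
    {S : Finset (Finset (Fin r))} (hS : BoolNested 𝓕 S) : S.card ≤ r := by
  classical
  choose f hf1 hf2 using fun A : S => aux_elem hb hS A.2
  have hinj : Function.Injective f := by
    intro A B h
    by_contra hne
    have hne' : A.1 ≠ B.1 := fun h => hne (Subtype.ext h)
    have hB : f A ∈ B.1 := h ▸ hf1 B
    rcases aux_laminar hb hS A.2 B.2 (hf1 A) hB with h1 | h1
    · exact hf2 B A.1 A.2 (h1.ssubset_of_ne hne') (h ▸ hf1 A)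
    · exact hf2 A B.1 B.2 (h1.ssubset_of_ne hne'.symm) hB
  have := Fintype.card_le_of_injective f hinj
  simpa using this

/-- A nested set containing the top, with two elements with the same minimal member,
can be enlarged. -/
theorem aux_extend {𝓕 : Set (Finset (Fin r))} (hb : BoolBuilding 𝓕)
    {N : Finset (Finset (Fin r))} (hN : BoolNested 𝓕 N) {A : Finset (Fin r)} (hA : A ∈ N)
    {x y : Fin r} (hxy : x ≠ y) (hxA : x ∈ A) (hyA : y ∈ A)
    (hx : ∀ B ∈ N, B ⊂ A → x ∉ B) (hy : ∀ B ∈ N, B ⊂ A → y ∉ B) :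
    ∃ C, C ∉ N ∧ x ∉ C ∧ BoolNested 𝓕 (insert C N) := by
  classical
  let P : Finset (Finset (Fin r)) :=
    Finset.univ.filter (fun C => C ∈ 𝓕 ∧ C ⊆ A ∧ x ∉ C ∧ y ∈ C)
  obtain ⟨C, -, hC⟩ := P.exists_le_maximal (a := {y})
    (by simp [P, aux_singleton hb y, hyA, hxy])
  have hCP := hC.1
  simp only [P, Finset.mem_filter, Finset.mem_univ, true_and] at hCP
  obtain ⟨hCF, hCA, hxC, hyC⟩ := hCP
  have hCA' : C ⊂ A := ⟨hCA, fun h => hxC (h hxA)⟩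
  refine ⟨C, fun h => hy C h hCA' hyC, hxC, ?_, ?_⟩
  · intro B hB
    rcases Finset.mem_insert.1 (Finset.mem_coe.1 hB) with rfl | h
    · exact hCF
    · exact hN.1 h
  intro T hT hc ha hU
  by_cases hCT : C ∈ T
  swap
  · refine hN.2 T ?_ hc ha hU
    intro B hB
    rcases Finset.mem_insert.1 (hT hB) with rfl | h
    · exact absurd hB hCT
    · exact h
  have hTN : ∀ B ∈ T, B ≠ C → B ∈ N := fun B hB hne =>
    (Finset.mem_insert.1 (hT hB)).resolve_left hne
  have hcase : ∀ B ∈ T, B ≠ C → B ⊂ A ∨ Disjoint B A := by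
    intro B hB hne
    by_cases hd : Disjoint B A
    · exact Or.inr hd
    · left
      obtain ⟨z, hz1, hz2⟩ := Finset.not_disjoint_iff.1 hd
      have hAB : ¬ A ⊆ B := fun h => (ha B hB C hCT hne).2 (hCA.trans h)
      rcases aux_laminar hb hN (hTN B hB hne) hA hz1 hz2 with h | h
      · exact ⟨h, hAB⟩
      · exact absurd h hAB
  have hCU : C ⊆ T.sup id := Finset.le_sup (f := id) hCT
  by_cases hall : ∀ B ∈ T, B ≠ C → B ⊂ A
  · -- the union lies in `A \ {x}`, contradicting maximality of `C`
    have hUP : T.sup id ∈ P := by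
      simp only [P, Finset.mem_filter, Finset.mem_univ, true_and]
      refine ⟨hU, ?_, ?_, hCU hyC⟩
      · apply Finset.sup_le
        intro B hB
        by_cases h : B = C
        · exact h ▸ hCA
        · exact (hall B hB h).1
      · intro hxU
        obtain ⟨B, hB, hxB⟩ := Finset.mem_sup.1 hxU
        by_cases h : B = C
        · exact hxC (h ▸ hxB)
        · exact hx B (hTN B hB h) (hall B hB h) hxB
    obtain ⟨B, hB, hne⟩ := Finset.exists_mem_ne hc C
    exact (ha B hB C hCT hne).1 ((Finset.le_sup (f := id) hB).trans (hC.2 hUP hCU))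
  · push Not at hall
    obtain ⟨B, hB, hne, hBA⟩ := hall
    let D := T.filter (fun B => B ≠ C ∧ Disjoint B A)
    have hBD : B ∈ D := Finset.mem_filter.2 ⟨hB, hne, (hcase B hB hne).resolve_left hBA⟩
    have hDN : ∀ E ∈ D, E ∈ N := fun E hE =>
      hTN E (Finset.mem_filter.1 hE).1 (Finset.mem_filter.1 hE).2.1
    have hdis : ∀ E ∈ D, ¬ E ⊆ A ∧ ¬ A ⊆ E := by
      intro E hE
      have hd := (Finset.mem_filter.1 hE).2.2
      obtain ⟨z, hz⟩ := Finset.nonempty_iff_ne_empty.2 (hb.1 E (hN.1 (hDN E hE)))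
      exact ⟨fun h => Finset.disjoint_left.1 hd hz (h hz),
        fun h => Finset.disjoint_left.1 hd (h hxA) hxA⟩
    have hAD : A ∉ D := fun h => (hdis A h).1 subset_rfl
    refine hN.2 (insert A D) ?_ ?_ ?_ ?_
    · intro E hE
      rcases Finset.mem_insert.1 hE with rfl | h
      · exact hA
      · exact hDN E h
    · rw [Finset.card_insert_of_notMem hAD]
      have : 0 < D.card := Finset.card_pos.2 ⟨B, hBD⟩
      omega
    · intro E hE G hG hEG
      rcases Finset.mem_insert.1 hE with rfl | h1 <;> rcases Finset.mem_insert.1 hG with rfl | h2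
      · exact absurd rfl hEG
      · exact (hdis G h2).symm
      · exact hdis E h1
      · exact ha E (Finset.mem_filter.1 h1).1 G (Finset.mem_filter.1 h2).1 hEG
    · have hEq : (insert A D).sup id = A ∪ T.sup id := by
        rw [Finset.sup_insert]
        apply le_antisymm
        · exact sup_le_sup le_rfl (Finset.sup_mono (Finset.filter_subset _ _))
        · apply sup_le le_sup_left
          apply Finset.sup_le
          intro E hE
          by_cases h : E = C
          · exact (show E ≤ A from h ▸ hCA).trans le_sup_left
          · rcases hcase E hE h with h' | h'
            · exact (show E ≤ A from h'.1).trans le_sup_left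
            · exact (Finset.le_sup (f := id)
                (show E ∈ D from Finset.mem_filter.2 ⟨hE, h, h'⟩)).trans le_sup_right
      rw [hEq]
      exact aux_union hb (hN.1 hA) hU hyA (hCU hyC)

theorem aux_card_ge {𝓕 : Set (Finset (Fin r))} (hb : BoolBuilding 𝓕)
    {N : Finset (Finset (Fin r))} (hN : BoolNested 𝓕 N) (htop : Finset.univ ∈ N)
    (hmax : ∀ C, C ≠ Finset.univ → BoolNested 𝓕 (insert C N) → C ∈ N) : r ≤ N.card := by
  classical
  have hex : ∀ x : Fin r, ∃ A : N, x ∈ A.1 ∧ ∀ B ∈ N, B ⊂ A.1 → x ∉ B := by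
    intro x
    obtain ⟨A, -, hA⟩ := (N.filter (fun A => x ∈ A)).exists_le_minimal (a := Finset.univ)
      (by simp [htop])
    have h1 := Finset.mem_filter.1 hA.1
    refine ⟨⟨A, h1.1⟩, h1.2, fun B hB hBA hxB => hBA.2 (hA.2 (Finset.mem_filter.2 ⟨hB, hxB⟩) hBA.1)⟩
  choose f hf1 hf2 using hex
  have hinj : Function.Injective f := by
    intro x y h
    by_contra hne
    obtain ⟨C, hC1, hC2, hC3⟩ := aux_extend hb hN (f x).2 hne (hf1 x) (h ▸ hf1 y) (hf2 x)
      (h ▸ hf2 y)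
    exact hC1 (hmax C (fun h => hC2 (h ▸ Finset.mem_univ x)) hC3)
  simpa using Fintype.card_le_of_injective f hinj

end Aux19

/-- Let `𝓕` be a building set in `2^[r]` with `[r] ∈ 𝓕` and let
`S ⊆ 𝓕 \ {[r]}` be nested with respect to `𝓕`.  Then (i) any two members of `S` are
disjoint or comparable; (ii) `|S| ≤ r - 1`; (iii) if `S` is maximal among nested
subsets of `𝓕 \ {[r]}`, then `|S| = r - 1`. -/
theorem statement19 {r : ℕ} (𝓕 : Set (Finset (Fin r))) (hb : BoolBuilding 𝓕)
    (htop : Finset.univ ∈ 𝓕)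
    (S : Finset (Finset (Fin r))) (hS : BoolNested 𝓕 S) (hSne : Finset.univ ∉ S) :
    (∀ A ∈ S, ∀ B ∈ S, A ∩ B = ∅ ∨ A ⊆ B ∨ B ⊆ A) ∧
    S.card ≤ r - 1 ∧
    ((∀ S' : Finset (Finset (Fin r)),
        BoolNested 𝓕 S' → Finset.univ ∉ S' → S ⊆ S' → S' = S) →
      S.card = r - 1) := by
  classical
  have hN := aux_top htop hS
  have hcard : (insert Finset.univ S).card = S.card + 1 := Finset.card_insert_of_notMem hSne
  have hle := aux_card_le hb hN
  refine ⟨?_, by omega, ?_⟩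
  · intro A hA B hB
    by_cases h : A ∩ B = ∅
    · exact Or.inl h
    · obtain ⟨x, hx⟩ := Finset.nonempty_iff_ne_empty.2 h
      exact Or.inr (aux_laminar hb hS hA hB (Finset.mem_inter.1 hx).1 (Finset.mem_inter.1 hx).2)
  · intro hmax
    have hge := aux_card_ge hb hN (Finset.mem_insert_self _ _) (by
      intro C hC hCN
      have hsub : insert C S ⊆ insert C (insert Finset.univ S) :=
        Finset.insert_subset_insert _ (Finset.subset_insert _ _)
      have := hmax (insert C S) (aux_mono hCN hsub) (by
        intro h
        rcases Finset.mem_insert.1 h with h | h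
        · exact hC h.symm
        · exact hSne h) (Finset.subset_insert _ _)
      exact Finset.mem_insert_of_mem (this ▸ Finset.mem_insert_self C S))
    omega
end
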